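/- For all nonnegative integers a, b: H(a,b) = (π^(2b) · 2^(2a+3))/((2a+2)!(2b+1)!) · ∫₀^(π/2) x^(2a+2) (1 − 2x/π)^(2b+1) cot(x) dx, where H(a,b) = ζ(2^a, 3, 2^b). -/

import Mathlib

open Real

/-- `∑_{n < m₁ < ⋯ < m_b} 1/(m₁² ⋯ m_b²)`; equals `1` when `b = 0`. -/
noncomputable def zetaTail (b n : ℕ) : ℝ :=
  ∑' f : {f : Fin b → ℕ // StrictMono f ∧ ∀ i, n < f i}, ∏ i, 1 / ((f.1 i : ℝ)) ^ 2

/-- `∑_{0 < n₁ < ⋯ < n_a < n} 1/(n₁² ⋯ n_a²)`; equals `1` when `a = 0`. -/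
noncomputable def zetaHead (a n : ℕ) : ℝ :=
  ∑' f : {f : Fin a → ℕ // StrictMono f ∧ ∀ i, 0 < f i ∧ f i < n},
    ∏ i, 1 / ((f.1 i : ℝ)) ^ 2

/-- The multiple zeta value `ζ(2,…,2,3,2,…,2)` with `a` twos before the `3` and `b` after. -/
noncomputable def H (a b : ℕ) : ℝ :=
  ∑' n : ℕ+, (1 / (n : ℝ) ^ 3) * zetaHead a n * zetaTail b n

open Set Filter Topology in
lemma nonneg_of_deriv_nn {g g' : ℝ → ℝ} {X : ℝ} (h : ∀ y, HasDerivAt g (g' y) y) (h0 : g 0 = 0)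
    (hn : ∀ y ∈ Set.Icc 0 X, 0 ≤ g' y) : ∀ y ∈ Set.Icc 0 X, 0 ≤ g y := by
  intro y hy
  have hm : MonotoneOn g (Set.Icc 0 X) := by
    apply monotoneOn_of_deriv_nonneg (convex_Icc 0 X)
    · exact fun z _ => (h z).continuousAt.continuousWithinAt
    · exact fun z _ => (h z).differentiableAt.differentiableWithinAt
    · intro z hz
      rw [(h z).deriv]
      exact hn z (interior_subset hz)
  have := hm ⟨le_refl 0, hy.1.trans hy.2⟩ hy hy.1
  rwa [h0] at this

/-- iterated head sums -/
noncomputable def hd : ℕ → ℕ → ℝ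
  | 0, _ => 1
  | k + 1, n => ∑ m ∈ Finset.range n, 1 / (m : ℝ) ^ 2 * hd k m

lemma hd_nonneg (k n : ℕ) : 0 ≤ hd k n := by
  induction k generalizing n with
  | zero => simp [hd]
  | succ k ih =>
    rw [hd]
    exact Finset.sum_nonneg fun m _ => mul_nonneg (by positivity) (ih m)

lemma hd_bdd (k : ℕ) : ∃ B : ℝ, 0 ≤ B ∧ ∀ n, hd k n ≤ B := by
  induction k with
  | zero => exact ⟨1, by norm_num, fun n => by simp [hd]⟩
  | succ k ih =>
    obtain ⟨B, hB, h⟩ := ih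
    have hs : Summable (fun m : ℕ => 1 / (m : ℝ) ^ 2) :=
      Real.summable_one_div_nat_pow.mpr (by norm_num)
    refine ⟨(∑' m : ℕ, 1 / (m : ℝ) ^ 2) * B, mul_nonneg (tsum_nonneg fun _ => by positivity) hB,
      fun n => ?_⟩
    rw [hd]
    calc _ ≤ ∑ m ∈ Finset.range n, 1 / (m : ℝ) ^ 2 * B :=
          Finset.sum_le_sum fun m _ => mul_le_mul_of_nonneg_left (h m) (by positivity)
      _ = (∑ m ∈ Finset.range n, 1 / (m : ℝ) ^ 2) * B := by rw [Finset.sum_mul]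
      _ ≤ _ := mul_le_mul_of_nonneg_right (hs.sum_le_tsum _ fun _ _ => by positivity) hB

/-- normalized Wallis products -/
noncomputable def W : ℕ → ℝ
  | 0 => 1
  | n + 1 => W n * ((2 * n + 1) / (2 * n + 2))

lemma W_pos (n : ℕ) : 0 < W n := by
  induction n with
  | zero => simp [W]
  | succ n ih => rw [W]; positivity

lemma inv_W_le (n : ℕ) : 1 / W n ≤ n + 1 := by
  induction n with
  | zero => simp [W]
  | succ n ih =>
    have := W_pos n
    rw [div_le_iff₀ (W_pos _)] at ih ⊢
    rw [W]
    push_cast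
    have e : ((n:ℝ) + 1 + 1) * (W n * ((2 * n + 1) / (2 * n + 2)))
        = ((n + 1) * W n) * (((n + 2) * (2 * n + 1)) / ((n + 1) * (2 * n + 2))) := by
      field_simp; ring
    rw [e]
    have : (1:ℝ) ≤ ((n + 2) * (2 * n + 1)) / ((n + 1) * (2 * n + 2)) := by
      rw [le_div_iff₀ (by positivity)]
      have : (0:ℝ) ≤ n := by positivity
      nlinarith
    nlinarith

/-- partial sums of the expansion of `x^(2N)/(2N)!` in powers of `sin x` -/
noncomputable def S : ℕ → ℕ → ℝ → ℝ
  | 0, _, _ => 1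
  | N + 1, M, x => ∑ n ∈ Finset.range M,
      1 / 4 ^ (N + 1) * (1 / W (n + 1)) / ((n : ℝ) + 1) ^ 2 * hd N (n + 1) * sin x ^ (2 * n + 2)

/-- derivative of `S` -/
noncomputable def S1 (N M : ℕ) (x : ℝ) : ℝ := ∑ n ∈ Finset.range M,
      1 / 4 ^ (N + 1) * (1 / W (n + 1)) / ((n : ℝ) + 1) ^ 2 * hd N (n + 1) *
        ((2 * n + 2) * sin x ^ (2 * n + 1) * cos x)

lemma S_nonneg (N M : ℕ) (x : ℝ) : 0 ≤ S N M x := by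
  cases N with
  | zero => simp [S]
  | succ N =>
    rw [S]
    refine Finset.sum_nonneg fun n _ => ?_
    have := W_pos (n + 1)
    have := hd_nonneg N (n + 1)
    have : 0 ≤ sin x ^ (2 * n + 2) := by
      rw [show 2 * n + 2 = 2 * (n + 1) by ring, pow_mul]; positivity
    positivity

lemma S_hasDerivAt (N M : ℕ) (x : ℝ) : HasDerivAt (S (N + 1) M) (S1 N M x) x := by
  have : S (N + 1) M = fun x => ∑ n ∈ Finset.range M,
      1 / 4 ^ (N + 1) * (1 / W (n + 1)) / ((n : ℝ) + 1) ^ 2 * hd N (n + 1) * sin x ^ (2 * n + 2) := by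
    funext x; rw [S]
  rw [this]
  unfold S1
  refine HasDerivAt.fun_sum fun n _ => ?_
  refine HasDerivAt.const_mul _ ?_
  have := (hasDerivAt_sin x).pow (2 * n + 2)
  refine this.congr_deriv ?_
  push_cast
  rfl

lemma S1_hasDerivAt (N M : ℕ) (x : ℝ) : HasDerivAt (S1 N M)
    (S N M x - 1 / 4 ^ N * hd N (M + 1) * (1 / W M * sin x ^ (2 * M))) x := by
  induction M with
  | zero =>
    have e : S1 N 0 = fun _ => 0 := by funext y; simp [S1]
    rw [e]
    have : (S N 0 x - 1 / 4 ^ N * hd N (0 + 1) * (1 / W 0 * sin x ^ (2 * 0))) = 0 := by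
      cases N <;> simp [S, hd, W]
    rw [this]
    exact hasDerivAt_const _ _
  | succ M ih =>
    have e : S1 N (M + 1) = fun y => S1 N M y +
      1 / 4 ^ (N + 1) * (1 / W (M + 1)) / ((M : ℝ) + 1) ^ 2 * hd N (M + 1) *
        ((2 * M + 2) * sin y ^ (2 * M + 1) * cos y) := by
      funext y; simp only [S1]; rw [Finset.sum_range_succ]
    rw [e]
    have h1 : HasDerivAt (fun y => (2 * (M:ℝ) + 2) * sin y ^ (2 * M + 1) * cos y)
      ((2 * (M:ℝ) + 2) * ((2 * M + 1) * sin x ^ (2 * M) - (2 * M + 2) * sin x ^ (2 * M + 2))) x := by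
      have := (((hasDerivAt_sin x).pow (2 * M + 1)).const_mul (2 * (M:ℝ) + 2)).mul
        (hasDerivAt_cos x)
      refine this.congr_deriv ?_
      have h2 : cos x * cos x = 1 - sin x ^ 2 := by rw [← sq, cos_sq']
      simp only [Pi.pow_apply]
      push_cast
      try simp only [Nat.add_sub_cancel]
      calc _ = (2 * (M:ℝ) + 2) * ((2 * M + 1) * sin x ^ (2 * M) * (cos x * cos x)
              - sin x ^ (2 * M + 2)) := by ring
        _ = _ := by rw [h2]; ring
    refine (ih.add (h1.const_mul _)).congr_deriv ?_
    have hW := (W_pos M).ne'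
    have hM : (M:ℝ) + 1 ≠ 0 := by positivity
    have hM' : 2 * (M:ℝ) + 1 ≠ 0 := by positivity
    cases N with
    | zero =>
      simp only [S, hd, W]
      field_simp
      ring
    | succ N =>
      simp only [S]
      rw [Finset.sum_range_succ]
      have : hd (N + 1) (M + 1 + 1) = hd (N + 1) (M + 1) + 1 / ((M:ℝ) + 1) ^ 2 * hd N (M + 1) := by
        rw [hd, hd, Finset.sum_range_succ _ (M + 1)]; push_cast; rfl
      rw [this]
      simp only [W]
      field_simp
      ring

lemma S_bound (X : ℝ) (hX0 : 0 ≤ X) (hX : X ≤ π / 2) (N : ℕ) : ∃ C : ℝ, 0 ≤ C ∧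
    ∀ M, ∀ y ∈ Set.Icc 0 X, 0 ≤ y ^ (2 * N) / (Nat.factorial (2 * N) : ℝ) - S N M y ∧
      y ^ (2 * N) / (Nat.factorial (2 * N) : ℝ) - S N M y ≤ C * (1 / W M * sin X ^ (2 * M)) := by
  induction N with
  | zero => exact ⟨0, le_refl _, fun M y _ => by simp [S]⟩
  | succ N ih =>
    obtain ⟨C, hC, ih⟩ := ih
    obtain ⟨B, hB, hb⟩ := hd_bdd N
    refine ⟨(C + 1 / 4 ^ N * B) * X * X, by positivity, fun M => ?_⟩
    set E := 1 / W M * sin X ^ (2 * M) with hE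
    have hsX : 0 ≤ sin X := sin_nonneg_of_nonneg_of_le_pi hX0 (by linarith [pi_pos])
    have hWp := W_pos M
    have hE0 : 0 ≤ E := by positivity
    set f2 : ℝ → ℝ := fun y => y ^ (2 * N) / (Nat.factorial (2 * N) : ℝ) - (S N M y
      - 1 / 4 ^ N * hd N (M + 1) * (1 / W M * sin y ^ (2 * M))) with hf2
    set f1 : ℝ → ℝ := fun y => y ^ (2 * N + 1) / (Nat.factorial (2 * N + 1) : ℝ) - S1 N M y with hf1
    set f : ℝ → ℝ := fun y => y ^ (2 * (N + 1)) / (Nat.factorial (2 * (N + 1)) : ℝ) - S (N + 1) M y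
      with hf
    have d1 : ∀ y, HasDerivAt f1 (f2 y) y := by
      intro y
      refine HasDerivAt.sub ?_ (S1_hasDerivAt N M y)
      refine ((hasDerivAt_pow (2 * N + 1) y).div_const _).congr_deriv ?_
      rw [Nat.factorial_succ]
      have := (Nat.factorial_pos (2 * N)).ne'
      push_cast
      try simp only [Nat.add_sub_cancel]
      field_simp
    have d0 : ∀ y, HasDerivAt f (f1 y) y := by
      intro y
      refine HasDerivAt.sub ?_ (S_hasDerivAt N M y)
      refine ((hasDerivAt_pow (2 * (N + 1)) y).div_const _).congr_deriv ?_
      rw [show 2 * (N + 1) = (2 * N + 1) + 1 by ring, Nat.factorial_succ (2 * N + 1)]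
      have := (Nat.factorial_pos (2 * N + 1)).ne'
      push_cast
      try simp only [Nat.add_sub_cancel]
      field_simp
    have z1 : f1 0 = 0 := by simp [hf1, S1]
    have z0 : f 0 = 0 := by simp [hf, S]
    have hs : ∀ y ∈ Set.Icc 0 X, 0 ≤ sin y ^ (2 * M) ∧ sin y ^ (2 * M) ≤ sin X ^ (2 * M) := by
      intro y hy
      have a1 : 0 ≤ sin y := sin_nonneg_of_nonneg_of_le_pi hy.1 (by linarith [pi_pos, hy.2])
      have a2 : sin y ≤ sin X := sin_le_sin_of_le_of_le_pi_div_two (by linarith [pi_pos, hy.1]) hX hy.2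
      exact ⟨by positivity, pow_le_pow_left₀ a1 a2 _⟩
    have p2 : ∀ y ∈ Set.Icc 0 X, 0 ≤ f2 y := by
      intro y hy
      have h1 := (ih M y hy).1
      have h2 := (hs y hy).1
      have h3 := hd_nonneg N (M + 1)
      have : 0 ≤ 1 / 4 ^ N * hd N (M + 1) * (1 / W M * sin y ^ (2 * M)) := by positivity
      simp only [hf2]; linarith
    have q2 : ∀ y ∈ Set.Icc 0 X, f2 y ≤ (C + 1 / 4 ^ N * B) * E := by
      intro y hy
      have h1 := (ih M y hy).2
      have h2 := hs y hy
      have h3 := hd_nonneg N (M + 1)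
      have : 1 / 4 ^ N * hd N (M + 1) * (1 / W M * sin y ^ (2 * M)) ≤ 1 / 4 ^ N * B * E := by
        apply mul_le_mul
        · exact mul_le_mul_of_nonneg_left (hb _) (by positivity)
        · exact mul_le_mul_of_nonneg_left h2.2 (by positivity)
        · have := h2.1; positivity
        · positivity
      simp only [hf2]; linarith
    have p1 := nonneg_of_deriv_nn d1 z1 p2
    have p0 := nonneg_of_deriv_nn d0 z0 p1
    set K := (C + 1 / 4 ^ N * B) * E with hK
    have hK0 : 0 ≤ K := by positivity
    have q1 := nonneg_of_deriv_nn (X := X) (g := fun y => K * y - f1 y) (g' := fun y => K * 1 - f2 y)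
      (fun y => ((hasDerivAt_id y).const_mul K).sub (d1 y)) (by simp [z1])
      (fun y hy => by have := q2 y hy; linarith)
    have q0 := nonneg_of_deriv_nn (X := X) (g := fun y => K * X * y - f y)
      (g' := fun y => K * X * 1 - f1 y)
      (fun y => ((hasDerivAt_id y).const_mul (K * X)).sub (d0 y)) (by simp [z0])
      (fun y hy => by
        have := q1 y hy
        have h := mul_le_mul_of_nonneg_left hy.2 hK0
        linarith)
    intro y hy
    refine ⟨p0 y hy, ?_⟩
    have := q0 y hy
    have h := mul_le_mul_of_nonneg_left hy.2 (mul_nonneg hK0 hX0)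
    have e : (C + 1 / 4 ^ N * B) * X * X * E = K * X * X := by rw [hK]; ring
    rw [e]
    change f y ≤ _
    linarith

open Filter Topology in
lemma S_tendsto (N : ℕ) (x : ℝ) (h0 : 0 ≤ x) (h1 : x < π / 2) :
    Tendsto (fun M => S N M x) atTop (𝓝 (x ^ (2 * N) / (Nat.factorial (2 * N) : ℝ))) := by
  obtain ⟨C, hC, h⟩ := S_bound x h0 h1.le N
  have hs0 : 0 ≤ sin x := sin_nonneg_of_nonneg_of_le_pi h0 (by linarith [pi_pos])
  have hs1 : sin x < 1 := by
    rw [← sin_pi_div_two]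
    exact sin_lt_sin_of_lt_of_le_pi_div_two (by linarith [pi_pos]) le_rfl h1
  have hr1 : sin x ^ 2 < 1 := by nlinarith
  have t : Tendsto (fun M : ℕ => 1 / W M * sin x ^ (2 * M)) atTop (𝓝 0) := by
    have t1 : Tendsto (fun M : ℕ => (M:ℝ) * (sin x ^ 2) ^ M + (sin x ^ 2) ^ M) atTop (𝓝 (0 + 0)) :=
      (tendsto_self_mul_const_pow_of_lt_one (by positivity) hr1).add
        (tendsto_pow_atTop_nhds_zero_of_lt_one (by positivity) hr1)
    rw [add_zero] at t1
    refine squeeze_zero (fun M => ?_) (fun M => ?_) t1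
    · have := W_pos M; positivity
    · rw [pow_mul, ← add_one_mul]
      exact mul_le_mul_of_nonneg_right (inv_W_le M) (by positivity)
  have t2 := t.const_mul C
  rw [mul_zero] at t2
  have t3 := squeeze_zero (fun M => (h M x ⟨h0, le_rfl⟩).1) (fun M => (h M x ⟨h0, le_rfl⟩).2) t2
  have t4 := t3.const_sub (x ^ (2 * N) / (Nat.factorial (2 * N) : ℝ))
  simpa using t4

/-- moments of even powers of cosine -/
noncomputable def I (b n : ℕ) : ℝ := ∫ y in (0:ℝ)..(π / 2), y ^ (2 * b) * cos y ^ (2 * n)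

lemma cos_deriv2 (n : ℕ) (y : ℝ) : HasDerivAt (fun y => -((2 * (n:ℝ) + 2) * cos y ^ (2 * n + 1) * sin y))
    ((2 * (n:ℝ) + 2) * ((2 * n + 1) * cos y ^ (2 * n) - (2 * n + 2) * cos y ^ (2 * n + 2))) y := by
  have := ((((hasDerivAt_cos y).pow (2 * n + 1)).const_mul (2 * (n:ℝ) + 2)).mul
    (hasDerivAt_sin y)).neg
  refine this.congr_deriv ?_
  have h2 : sin y * sin y = 1 - cos y ^ 2 := by rw [← sq, sin_sq]
  simp only [Pi.pow_apply]
  push_cast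
  try simp only [Nat.add_sub_cancel]
  calc _ = (2 * (n:ℝ) + 2) * ((2 * n + 1) * cos y ^ (2 * n) * (sin y * sin y)
          - cos y ^ (2 * n + 2)) := by ring
    _ = _ := by rw [h2]; ring

lemma cos_deriv1 (n : ℕ) (y : ℝ) : HasDerivAt (fun y => cos y ^ (2 * n + 2))
    (-((2 * (n:ℝ) + 2) * cos y ^ (2 * n + 1) * sin y)) y := by
  refine ((hasDerivAt_cos y).pow (2 * n + 2)).congr_deriv ?_
  push_cast
  try simp only [show 2 * n + 2 - 1 = 2 * n + 1 by omega]
  ring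

lemma I_int (b n : ℕ) : IntervalIntegrable (fun y : ℝ => y ^ (2 * b) * cos y ^ (2 * n))
    MeasureTheory.volume 0 (π / 2) :=
  Continuous.intervalIntegrable (by fun_prop) _ _

lemma I_zero (n : ℕ) : I 0 n = π / 2 * W n := by
  induction n with
  | zero => simp [I, W]
  | succ n ih =>
    have h := intervalIntegral.integral_eq_sub_of_hasDerivAt (a := 0) (b := π / 2)
      (fun y _ => cos_deriv2 n y) (Continuous.intervalIntegrable (by fun_prop) _ _)
    simp only [cos_pi_div_two, sin_zero] at h
    have e : (∫ y in (0:ℝ)..(π / 2), (2 * (n:ℝ) + 2) * ((2 * n + 1) * cos y ^ (2 * n) -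
        (2 * n + 2) * cos y ^ (2 * n + 2))) =
        (2 * (n:ℝ) + 2) * ((2 * n + 1) * I 0 n - (2 * n + 2) * I 0 (n + 1)) := by
      unfold I
      rw [intervalIntegral.integral_const_mul, intervalIntegral.integral_sub,
        intervalIntegral.integral_const_mul, intervalIntegral.integral_const_mul]
      · simp [mul_add]
      · exact Continuous.intervalIntegrable (by fun_prop) _ _
      · exact Continuous.intervalIntegrable (by fun_prop) _ _
    rw [e, ih] at h
    have h' : (2 * (n:ℝ) + 2) * ((2 * n + 1) * (π / 2 * W n) - (2 * n + 2) * I 0 (n + 1)) = 0 := by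
      rw [h]; simp
    have hn : (2 * (n:ℝ) + 2) ≠ 0 := by positivity
    have h2 := (mul_eq_zero.mp h').resolve_left hn
    rw [W]
    field_simp
    field_simp at h2
    linarith

lemma I_rec (b n : ℕ) : (2 * (n:ℝ) + 2) * ((2 * n + 1) * I (b + 1) n - (2 * n + 2) * I (b + 1) (n + 1))
    = (2 * b + 2) * (2 * b + 1) * I b (n + 1) := by
  have hd : ∀ y : ℝ, HasDerivAt (fun y : ℝ => y ^ (2 * b + 2) *
      (-((2 * (n:ℝ) + 2) * cos y ^ (2 * n + 1) * sin y)) -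
      (2 * b + 2) * y ^ (2 * b + 1) * cos y ^ (2 * n + 2))
      ((2 * (n:ℝ) + 2) * ((2 * n + 1) * (y ^ (2 * (b + 1)) * cos y ^ (2 * n)) -
        (2 * n + 2) * (y ^ (2 * (b + 1)) * cos y ^ (2 * (n + 1)))) -
        (2 * b + 2) * (2 * b + 1) * (y ^ (2 * b) * cos y ^ (2 * (n + 1)))) y := by
    intro y
    refine (((hasDerivAt_pow (2 * b + 2) y).mul (cos_deriv2 n y)).sub
      (((hasDerivAt_pow (2 * b + 1) y).const_mul (2 * (b:ℝ) + 2)).mul (cos_deriv1 n y))).congr_deriv ?_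
    push_cast
    try simp only [show 2 * b + 2 - 1 = 2 * b + 1 by omega, Nat.add_sub_cancel]
    ring
  have h := intervalIntegral.integral_eq_sub_of_hasDerivAt (a := 0) (b := π / 2)
      (fun y _ => hd y) (Continuous.intervalIntegrable (by fun_prop) _ _)
  have e : (0:ℝ) ^ (2 * b + 1) = 0 := by simp
  simp only [cos_pi_div_two, sin_zero, mul_zero, neg_zero, ne_eq, Nat.add_eq_zero_iff, one_ne_zero,
    OfNat.ofNat_ne_zero, and_false, not_false_eq_true, zero_pow, zero_mul, sub_zero] at h
  rw [intervalIntegral.integral_sub, intervalIntegral.integral_const_mul,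
    intervalIntegral.integral_sub, intervalIntegral.integral_const_mul,
    intervalIntegral.integral_const_mul, intervalIntegral.integral_const_mul] at h
  · unfold I
    linarith
  all_goals exact Continuous.intervalIntegrable (by fun_prop) _ _

lemma I_nonneg (b n : ℕ) : 0 ≤ I b n := by
  unfold I
  apply intervalIntegral.integral_nonneg (by positivity)
  intro y hy
  rw [pow_mul, pow_mul]; positivity

lemma I_bound (b n : ℕ) : I (b + 1) n ≤ (π / 2) ^ (2 * b + 2) * (I 0 n - I 0 (n + 1)) := by
  unfold I
  rw [← intervalIntegral.integral_sub (I_int _ _) (I_int _ _),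
    ← intervalIntegral.integral_const_mul]
  apply intervalIntegral.integral_mono_on (by positivity) (I_int _ _)
    (((I_int _ _).sub (I_int _ _)).const_mul _)
  intro y hy
  have h1 : y ^ (2 * b) ≤ (π / 2) ^ (2 * b) := pow_le_pow_left₀ hy.1 hy.2 _
  have h2 : y ≤ π / 2 * sin y := by
    have := mul_le_sin hy.1 hy.2
    have hp := pi_pos
    calc y = π / 2 * (2 / π * y) := by field_simp
      _ ≤ _ := mul_le_mul_of_nonneg_left this (by positivity)
  have h3 : y ^ 2 ≤ (π / 2) ^ 2 * sin y ^ 2 := by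
    rw [← mul_pow]; exact pow_le_pow_left₀ hy.1 h2 _
  have h4 : 0 ≤ cos y ^ (2 * n) := by rw [pow_mul]; positivity
  have h5 : y ^ (2 * b) * y ^ 2 ≤ (π / 2) ^ (2 * b) * ((π / 2) ^ 2 * sin y ^ 2) :=
    mul_le_mul h1 h3 (by positivity) (by positivity)
  have h6 := mul_le_mul_of_nonneg_right h5 h4
  rw [sin_sq] at h6
  calc _ = y ^ (2 * b) * y ^ 2 * cos y ^ (2 * n) := by ring
    _ ≤ _ := h6
    _ = _ := by ring

/-- normalized moments: these are the tails -/
noncomputable def T (b n : ℕ) : ℝ := 4 ^ b * I b n / ((Nat.factorial (2 * b) : ℝ) * (π / 2 * W n))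

lemma T_nonneg (b n : ℕ) : 0 ≤ T b n := by
  have := I_nonneg b n
  have := W_pos n
  have := pi_pos
  unfold T; positivity

lemma T_zero (n : ℕ) : T 0 n = 1 := by
  have := (W_pos n).ne'
  unfold T; rw [I_zero]; have := pi_ne_zero; simp [*]

lemma T_rec (b n : ℕ) : T (b + 1) n - T (b + 1) (n + 1) = 1 / ((n:ℝ) + 1) ^ 2 * T b (n + 1) := by
  have hr := I_rec b n
  have := (W_pos n).ne'
  have hf := (Nat.factorial_pos (2 * b)).ne'
  have hp := pi_ne_zero
  have e : I b (n + 1) = (2 * (n:ℝ) + 2) * ((2 * n + 1) * I (b + 1) n -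
      (2 * n + 2) * I (b + 1) (n + 1)) / ((2 * b + 2) * (2 * b + 1)) := by
    rw [hr]; field_simp
  unfold T
  rw [e, W, show 2 * (b + 1) = (2 * b + 1) + 1 by ring, Nat.factorial_succ, Nat.factorial_succ]
  push_cast
  field_simp
  ring

open Filter Topology in
lemma T_tendsto (b : ℕ) : Tendsto (fun n => T (b + 1) n) atTop (𝓝 0) := by
  set K : ℝ := 4 ^ (b + 1) / (Nat.factorial (2 * (b + 1)) : ℝ) * (π / 2) ^ (2 * b + 2) with hK
  have t : Tendsto (fun n : ℕ => K * (1 / ((n:ℝ) + 1))) atTop (𝓝 (K * 0)) :=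
    tendsto_one_div_add_atTop_nhds_zero_nat.const_mul K
  rw [mul_zero] at t
  refine squeeze_zero (fun n => T_nonneg _ _) (fun n => ?_) t
  have h := I_bound b n
  rw [I_zero, I_zero, W] at h
  have hW := W_pos n
  have hp := pi_pos
  have hf := Nat.factorial_pos (2 * (b + 1))
  have e : π / 2 * W n - π / 2 * (W n * ((2 * (n:ℝ) + 1) / (2 * n + 2))) =
      π / 2 * W n * (1 / (2 * n + 2)) := by field_simp; ring
  rw [e] at h
  unfold T
  rw [div_le_iff₀ (by positivity)]
  have h2 : 1 / (2 * (n:ℝ) + 2) ≤ 1 / (n + 1) := by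
    apply one_div_le_one_div_of_le (by positivity)
    have : (0:ℝ) ≤ n := by positivity
    linarith
  calc 4 ^ (b + 1) * I (b + 1) n
      ≤ 4 ^ (b + 1) * ((π / 2) ^ (2 * b + 2) * (π / 2 * W n * (1 / (n + 1)))) := by
        apply mul_le_mul_of_nonneg_left (h.trans _) (by positivity)
        gcongr
    _ = _ := by rw [hK]; field_simp

open Filter Topology in
lemma T_hasSum (b n : ℕ) :
    HasSum (fun m : {m : ℕ // n < m} => 1 / ((m.1 : ℝ)) ^ 2 * T b m.1) (T (b + 1) n) := by
  let e : ℕ ≃ {m : ℕ // n < m} :=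
    { toFun := fun k => ⟨n + k + 1, by omega⟩
      invFun := fun m => m.1 - n - 1
      left_inv := fun k => by simp; omega
      right_inv := fun m => by
        obtain ⟨m, hm⟩ := m
        simp; omega }
  rw [← e.hasSum_iff]
  rw [hasSum_iff_tendsto_nat_of_nonneg]
  · have : ∀ M, ∑ i ∈ Finset.range M, ((fun m : {m : ℕ // n < m} => 1 / ((m.1 : ℝ)) ^ 2 * T b m.1) ∘ e) i
        = T (b + 1) n - T (b + 1) (n + M) := by
      intro M
      have h := Finset.sum_range_sub' (fun i => T (b + 1) (n + i)) M
      simp only [add_zero] at h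
      rw [← h]
      refine Finset.sum_congr rfl fun i _ => ?_
      have := T_rec b (n + i)
      rw [← add_assoc, this]
      simp [e]
    simp only [this]
    have t : Tendsto (fun M => T (b + 1) (n + M)) atTop (𝓝 0) := by
      have := (tendsto_add_atTop_iff_nat n).mpr (T_tendsto b)
      simpa only [add_comm] using this
    simpa using t.const_sub (T (b + 1) n)
  · intro i
    exact mul_nonneg (by positivity) (T_nonneg _ _)

lemma hasSum_congr_pt {ι : Type} {f g : ι → ℝ} {r : ℝ} (h : ∀ i, f i = g i) :
    HasSum f r ↔ HasSum g r := by
  rw [funext h]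

/-- split off the first entry -/
def tailEquiv (b n : ℕ) : (Σ m : {m : ℕ // n < m}, {f : Fin b → ℕ // StrictMono f ∧ ∀ i, m.1 < f i}) ≃
    {f : Fin (b + 1) → ℕ // StrictMono f ∧ ∀ i, n < f i} where
  toFun p := ⟨Fin.cons p.1.1 p.2.1, by
    obtain ⟨⟨m, hm⟩, f, hf, hg⟩ := p
    constructor
    · intro i j h
      induction i using Fin.cases with
      | zero =>
        induction j using Fin.cases with
        | zero => exact absurd h (lt_irrefl _)
        | succ j => simpa using hg j
      | succ i =>
        induction j using Fin.cases with
        | zero => exact absurd h (Fin.not_lt_zero _)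
        | succ j => simpa using hf (Fin.succ_lt_succ_iff.mp h)
    · intro i
      refine Fin.cases ?_ (fun j => ?_) i
      · simpa using hm
      · simpa using hm.trans (hg j)⟩
  invFun f := ⟨⟨f.1 0, f.2.2 0⟩, ⟨fun i => f.1 i.succ, fun i j h => f.2.1 (Fin.succ_lt_succ_iff.mpr h),
    fun i => f.2.1 (Fin.succ_pos i)⟩⟩
  left_inv p := by
    obtain ⟨⟨m, hm⟩, f, hf, hg⟩ := p
    simp
    rfl
  right_inv f := by
    obtain ⟨f, hf, hg⟩ := f
    ext i
    refine Fin.cases ?_ (fun j => ?_) i <;> simp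

lemma tail_hasSum (b n : ℕ) :
    HasSum (fun f : {f : Fin b → ℕ // StrictMono f ∧ ∀ i, n < f i} => ∏ i, 1 / ((f.1 i : ℝ)) ^ 2)
      (T b n) := by
  induction b generalizing n with
  | zero =>
    rw [T_zero]
    have : Unique {f : Fin 0 → ℕ // StrictMono f ∧ ∀ i, n < f i} :=
      { default := ⟨fun i => i.elim0, fun i => i.elim0, fun i => i.elim0⟩
        uniq := fun f => Subtype.ext (Subsingleton.elim _ _) }
    simpa using hasSum_unique
      (fun f : {f : Fin 0 → ℕ // StrictMono f ∧ ∀ i, n < f i} => ∏ i, 1 / ((f.1 i : ℝ)) ^ 2)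
  | succ b ih =>
    rw [← (tailEquiv b n).hasSum_iff]
    have hi : ∀ m : {m : ℕ // n < m}, HasSum (fun f : {f : Fin b → ℕ // StrictMono f ∧ ∀ i, m.1 < f i} =>
        ((fun f : {f : Fin (b + 1) → ℕ // StrictMono f ∧ ∀ i, n < f i} => ∏ i, 1 / ((f.1 i : ℝ)) ^ 2) ∘
          tailEquiv b n) ⟨m, f⟩) (1 / ((m.1 : ℝ)) ^ 2 * T b m.1) := by
      intro m
      refine (hasSum_congr_pt fun f => ?_).mpr ((ih m.1).mul_left (1 / ((m.1 : ℝ)) ^ 2))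
      simp only [Function.comp_apply]
      rw [Fin.prod_univ_succ]
      simp [tailEquiv]
    have ho := T_hasSum b n
    refine HasSum.sigma_of_hasSum ho hi ?_
    refine (summable_sigma_of_nonneg ?_).mpr ⟨fun m => (hi m).summable, ?_⟩
    · intro p
      exact Finset.prod_nonneg fun i _ => by positivity
    · refine ho.summable.congr fun m => ?_
      exact (hi m).tsum_eq.symm

lemma head_sigma_ext (a n : ℕ) (p q : Σ m : {m : ℕ // 0 < m ∧ m < n},
    {f : Fin a → ℕ // StrictMono f ∧ ∀ i, 0 < f i ∧ f i < m.1}) (h1 : p.1.1 = q.1.1)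
    (h2 : p.2.1 = q.2.1) : p = q := by
  obtain ⟨⟨m, hm⟩, f, hf⟩ := p
  obtain ⟨⟨m', hm'⟩, f', hf'⟩ := q
  simp only at h1 h2
  subst h1
  subst h2
  rfl

/-- split off the last entry -/
def headEquiv (a n : ℕ) : (Σ m : {m : ℕ // 0 < m ∧ m < n},
    {f : Fin a → ℕ // StrictMono f ∧ ∀ i, 0 < f i ∧ f i < m.1}) ≃
    {f : Fin (a + 1) → ℕ // StrictMono f ∧ ∀ i, 0 < f i ∧ f i < n} where
  toFun p := ⟨Fin.snoc (α := fun _ => ℕ) p.2.1 p.1.1, by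
    obtain ⟨⟨m, hm⟩, f, hf, hg⟩ := p
    constructor
    · intro i j h
      induction j using Fin.lastCases with
      | last =>
        induction i using Fin.lastCases with
        | last => exact absurd h (lt_irrefl _)
        | cast i => simpa using (hg i).2
      | cast j =>
        induction i using Fin.lastCases with
        | last => exact absurd h (not_lt.mpr (Fin.le_last _))
        | cast i => simpa using hf (Fin.castSucc_lt_castSucc_iff.mp h)
    · intro i
      induction i using Fin.lastCases with
      | last => simpa using hm
      | cast j => simpa using ⟨(hg j).1, (hg j).2.trans hm.2⟩⟩
  invFun f := ⟨⟨f.1 (Fin.last a), f.2.2 _⟩, ⟨fun i => f.1 i.castSucc,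
    fun i j h => f.2.1 (Fin.castSucc_lt_castSucc_iff.mpr h),
    fun i => ⟨(f.2.2 _).1, f.2.1 (Fin.castSucc_lt_last i)⟩⟩⟩
  left_inv p := by
    apply head_sigma_ext
    · simp
    · funext i
      simp
  right_inv f := by
    obtain ⟨f, hf, hg⟩ := f
    ext i
    induction i using Fin.lastCases <;> simp

lemma hd_hasSum (a n : ℕ) :
    HasSum (fun m : {m : ℕ // 0 < m ∧ m < n} => 1 / ((m.1 : ℝ)) ^ 2 * hd a m.1) (hd (a + 1) n) := by
  have h : HasSum (fun m : ℕ => if m ∈ Finset.range n then 1 / (m : ℝ) ^ 2 * hd a m else 0)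
      (hd (a + 1) n) := by
    have := hasSum_sum_of_ne_finset_zero (s := Finset.range n) (L := SummationFilter.unconditional ℕ)
      (f := fun m : ℕ => if m ∈ Finset.range n then 1 / (m : ℝ) ^ 2 * hd a m else 0)
      (fun m hm => by simp only [if_neg hm])
    convert this using 1
    rw [hd]
    exact Finset.sum_congr rfl fun m hm => by simp only [if_pos hm]
  have hinj : Function.Injective (fun m : {m : ℕ // 0 < m ∧ m < n} => m.1) := Subtype.val_injective
  refine (hasSum_congr_pt fun m => ?_).mp ((hinj.hasSum_iff ?_).mpr h)
  · simp [m.2.2]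
  · intro m hm
    split_ifs with hr
    · have : m = 0 := by
        by_contra h0
        exact hm ⟨⟨m, Nat.pos_of_ne_zero h0, Finset.mem_range.mp hr⟩, rfl⟩
      simp [this]
    · rfl

lemma head_hasSum (a n : ℕ) :
    HasSum (fun f : {f : Fin a → ℕ // StrictMono f ∧ ∀ i, 0 < f i ∧ f i < n} =>
      ∏ i, 1 / ((f.1 i : ℝ)) ^ 2) (hd a n) := by
  induction a generalizing n with
  | zero =>
    have : Unique {f : Fin 0 → ℕ // StrictMono f ∧ ∀ i, 0 < f i ∧ f i < n} :=
      { default := ⟨fun i => i.elim0, fun i => i.elim0, fun i => i.elim0⟩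
        uniq := fun f => Subtype.ext (Subsingleton.elim _ _) }
    simpa [hd] using hasSum_unique
      (fun f : {f : Fin 0 → ℕ // StrictMono f ∧ ∀ i, 0 < f i ∧ f i < n} => ∏ i, 1 / ((f.1 i : ℝ)) ^ 2)
  | succ a ih =>
    rw [← (headEquiv a n).hasSum_iff]
    have hi : ∀ m : {m : ℕ // 0 < m ∧ m < n}, HasSum
        (fun f : {f : Fin a → ℕ // StrictMono f ∧ ∀ i, 0 < f i ∧ f i < m.1} =>
        ((fun f : {f : Fin (a + 1) → ℕ // StrictMono f ∧ ∀ i, 0 < f i ∧ f i < n} =>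
          ∏ i, 1 / ((f.1 i : ℝ)) ^ 2) ∘ headEquiv a n) ⟨m, f⟩) (1 / ((m.1 : ℝ)) ^ 2 * hd a m.1) := by
      intro m
      refine (hasSum_congr_pt fun f => ?_).mpr ((ih m.1).mul_left (1 / ((m.1 : ℝ)) ^ 2))
      simp only [Function.comp_apply]
      rw [Fin.prod_univ_castSucc, mul_comm]
      simp [headEquiv]
    have ho := hd_hasSum a n
    refine HasSum.sigma_of_hasSum ho hi ?_
    refine (summable_sigma_of_nonneg ?_).mpr ⟨fun m => (hi m).summable, ?_⟩
    · intro p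
      exact Finset.prod_nonneg fun i _ => by positivity
    · refine ho.summable.congr fun m => ?_
      exact (hi m).tsum_eq.symm

lemma term_integral (b n : ℕ) :
    (∫ x in (0:ℝ)..(π / 2), sin x ^ (2 * n + 1) * cos x * (π / 2 - x) ^ (2 * b + 1)) =
      (2 * b + 1) / (2 * n + 2) * I b (n + 1) := by
  have hd : ∀ x : ℝ, HasDerivAt (fun x : ℝ => sin x ^ (2 * n + 2) * (π / 2 - x) ^ (2 * b + 1))
      ((2 * (n:ℝ) + 2) * (sin x ^ (2 * n + 1) * cos x * (π / 2 - x) ^ (2 * b + 1)) -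
        (2 * (b:ℝ) + 1) * (sin x ^ (2 * n + 2) * (π / 2 - x) ^ (2 * b))) x := by
    intro x
    refine (((hasDerivAt_sin x).pow (2 * n + 2)).mul
      (((hasDerivAt_id x).const_sub (π / 2)).pow (2 * b + 1))).congr_deriv ?_
    simp only [Pi.pow_apply, id]
    push_cast
    try simp only [show 2 * n + 2 - 1 = 2 * n + 1 by omega, Nat.add_sub_cancel]
    ring
  have h := intervalIntegral.integral_eq_sub_of_hasDerivAt (a := 0) (b := π / 2)
      (fun y _ => hd y) (Continuous.intervalIntegrable (by fun_prop) _ _)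
  rw [intervalIntegral.integral_sub, intervalIntegral.integral_const_mul,
    intervalIntegral.integral_const_mul] at h
  rotate_left
  · exact Continuous.intervalIntegrable (by fun_prop) _ _
  · exact Continuous.intervalIntegrable (by fun_prop) _ _
  have e : (∫ x in (0:ℝ)..(π / 2), sin x ^ (2 * n + 2) * (π / 2 - x) ^ (2 * b)) = I b (n + 1) := by
    have := intervalIntegral.integral_comp_sub_left (a := 0) (b := π / 2)
      (fun y => y ^ (2 * b) * cos y ^ (2 * (n + 1))) (π / 2)
    simp only [cos_pi_div_two_sub, sub_self, sub_zero] at this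
    rw [I, ← this]
    refine intervalIntegral.integral_congr fun x _ => ?_
    try simp only []
    ring
  rw [e] at h
  simp only [sin_zero, sub_self, ne_eq, Nat.add_eq_zero_iff, one_ne_zero,
    OfNat.ofNat_ne_zero, and_false, not_false_eq_true, zero_pow, zero_mul, mul_zero, sub_zero] at h
  have hn : (2 * (n:ℝ) + 2) ≠ 0 := by positivity
  rw [div_mul_eq_mul_div, eq_div_iff hn]
  linarith

lemma partial_integral (a b M : ℕ) :
    (∫ x in (0:ℝ)..(π / 2), S (a + 1) M x * (π / 2 - x) ^ (2 * b + 1) * Real.cot x) =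
    (Nat.factorial (2 * b + 1) : ℝ) * π / (4 ^ (a + 1) * 4 ^ b * 4) *
      ∑ n ∈ Finset.range M, 1 / ((n:ℝ) + 1) ^ 3 * hd a (n + 1) * T b (n + 1) := by
  have e : ∀ x : ℝ, S (a + 1) M x * (π / 2 - x) ^ (2 * b + 1) * Real.cot x =
      ∑ n ∈ Finset.range M, 1 / 4 ^ (a + 1) * (1 / W (n + 1)) / ((n : ℝ) + 1) ^ 2 * hd a (n + 1) *
        (sin x ^ (2 * n + 1) * cos x * (π / 2 - x) ^ (2 * b + 1)) := by
    intro x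
    rw [S, Finset.sum_mul, Finset.sum_mul]
    refine Finset.sum_congr rfl fun n _ => ?_
    have : sin x ^ (2 * n + 2) * Real.cot x = sin x ^ (2 * n + 1) * cos x := by
      rw [Real.cot_eq_cos_div_sin]
      by_cases h : sin x = 0
      · simp [h]
      · field_simp
        ring
    calc _ = 1 / 4 ^ (a + 1) * (1 / W (n + 1)) / ((n : ℝ) + 1) ^ 2 * hd a (n + 1) *
          ((sin x ^ (2 * n + 2) * Real.cot x) * (π / 2 - x) ^ (2 * b + 1)) := by ring
      _ = _ := by rw [this]
  simp only [e]
  rw [intervalIntegral.integral_finsetSum]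
  · rw [Finset.mul_sum]
    refine Finset.sum_congr rfl fun n _ => ?_
    rw [intervalIntegral.integral_const_mul, term_integral, T, Nat.factorial_succ]
    have := (W_pos (n + 1)).ne'
    have := (Nat.factorial_pos (2 * b)).ne'
    have := pi_ne_zero
    push_cast
    field_simp
    ring
  · intro n _
    exact Continuous.intervalIntegrable (by fun_prop) _ _

lemma x_cot_le (x : ℝ) (h0 : 0 < x) (h1 : x ≤ π / 2) : 0 ≤ Real.cot x ∧ x * Real.cot x ≤ π / 2 := by
  have hs : 0 < sin x := sin_pos_of_pos_of_lt_pi h0 (by linarith [pi_pos])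
  have hc : 0 ≤ cos x := cos_nonneg_of_neg_pi_div_two_le_of_le (by linarith [pi_pos]) h1
  rw [Real.cot_eq_cos_div_sin]
  refine ⟨by positivity, ?_⟩
  have h2 : x ≤ π / 2 * sin x := by
    have := mul_le_sin h0.le h1
    have hp := pi_pos
    calc x = π / 2 * (2 / π * x) := by field_simp
      _ ≤ _ := mul_le_mul_of_nonneg_left this (by positivity)
  rw [← mul_div_assoc, div_le_iff₀ hs]
  have := cos_le_one x
  nlinarith

open Filter Topology MeasureTheory in
lemma integral_tendsto (a b : ℕ) :
    Tendsto (fun M => ∫ x in (0:ℝ)..(π / 2), S (a + 1) M x * (π / 2 - x) ^ (2 * b + 1) * Real.cot x)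
      atTop (𝓝 (∫ x in (0:ℝ)..(π / 2), x ^ (2 * (a + 1)) / (Nat.factorial (2 * (a + 1)) : ℝ) *
        (π / 2 - x) ^ (2 * b + 1) * Real.cot x)) := by
  have hp := pi_pos
  have hcot : Measurable Real.cot := by
    have : Real.cot = fun x => cos x / sin x := by funext x; exact Real.cot_eq_cos_div_sin x
    rw [this]; fun_prop
  refine intervalIntegral.tendsto_integral_filter_of_dominated_convergence
    (fun _ => (π / 2) ^ (2 * a + 1) * (π / 2) ^ (2 * b + 1) * (π / 2)) ?_ ?_ ?_ ?_
  · refine Eventually.of_forall fun M => ?_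
    have hS : Measurable (S (a + 1) M) :=
      (continuous_iff_continuousAt.mpr fun x => (S_hasDerivAt a M x).continuousAt).measurable
    exact Measurable.aestronglyMeasurable (by fun_prop)
  · refine Eventually.of_forall fun M => Eventually.of_forall fun x hx => ?_
    rw [Set.uIoc_of_le (by positivity)] at hx
    obtain ⟨C, hC, h⟩ := S_bound (π / 2) (by positivity) le_rfl (a + 1)
    have h1 := (h M x ⟨hx.1.le, hx.2⟩).1
    have h0 := S_nonneg (a + 1) M x
    obtain ⟨c0, c1⟩ := x_cot_le x hx.1 hx.2
    have hx0 := hx.1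
    have hb0 : 0 ≤ π / 2 - x := by linarith [hx.2]
    rw [Real.norm_of_nonneg (by positivity)]
    have h2 : S (a + 1) M x ≤ x ^ (2 * (a + 1)) := by
      have : x ^ (2 * (a + 1)) / (Nat.factorial (2 * (a + 1)) : ℝ) ≤ x ^ (2 * (a + 1)) :=
        div_le_self (by positivity) (by exact_mod_cast Nat.factorial_pos _)
      linarith
    calc S (a + 1) M x * (π / 2 - x) ^ (2 * b + 1) * Real.cot x
        ≤ x ^ (2 * (a + 1)) * (π / 2 - x) ^ (2 * b + 1) * Real.cot x := by gcongr
      _ = x ^ (2 * a + 1) * (π / 2 - x) ^ (2 * b + 1) * (x * Real.cot x) := by ring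
      _ ≤ _ := by
        have := hx.2
        gcongr
        linarith
  · exact intervalIntegrable_const
  · have : ∀ᵐ x : ℝ, x ≠ π / 2 := by
      simp [ae_iff]
    filter_upwards [this] with x hne hx
    rw [Set.uIoc_of_le (by positivity)] at hx
    exact ((S_tendsto (a + 1) x hx.1.le (lt_of_le_of_ne hx.2 hne)).mul_const _).mul_const _

theorem H_eq_cot_integral (a b : ℕ) :
    H a b = π ^ (2 * b) * 2 ^ (2 * a + 3) /
        ((Nat.factorial (2 * a + 2)) * (Nat.factorial (2 * b + 1))) *
      ∫ x in (0:ℝ)..(π / 2),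
        x ^ (2 * a + 2) * (1 - 2 * x / π) ^ (2 * b + 1) * Real.cot x := by
  have hp := pi_ne_zero
  have f1 : (Nat.factorial (2 * a + 2) : ℝ) ≠ 0 := by exact_mod_cast (Nat.factorial_pos _).ne'
  have f2 : (Nat.factorial (2 * b + 1) : ℝ) ≠ 0 := by exact_mod_cast (Nat.factorial_pos _).ne'
  have t := integral_tendsto a b
  simp only [partial_integral] at t
  set J := ∫ x in (0:ℝ)..(π / 2), x ^ (2 * (a + 1)) / (Nat.factorial (2 * (a + 1)) : ℝ) *
        (π / 2 - x) ^ (2 * b + 1) * Real.cot x with hJ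
  set c : ℝ := (Nat.factorial (2 * b + 1) : ℝ) * π / (4 ^ (a + 1) * 4 ^ b * 4) with hc
  have hc0 : c ≠ 0 := by rw [hc]; positivity
  have t2 := t.const_mul c⁻¹
  simp only [inv_mul_cancel_left₀ hc0] at t2
  rw [← hasSum_iff_tendsto_nat_of_nonneg (fun n => mul_nonneg (mul_nonneg (by positivity)
    (hd_nonneg _ _)) (T_nonneg _ _))] at t2
  have hH : H a b = c⁻¹ * J := by
    rw [← t2.tsum_eq, H, ← Equiv.pnatEquivNat.symm.tsum_eq]
    refine tsum_congr fun n => ?_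
    rw [zetaHead, zetaTail, (head_hasSum _ _).tsum_eq, (tail_hasSum _ _).tsum_eq]
    simp
  have hJ2 : J = (π / 2) ^ (2 * b + 1) / (Nat.factorial (2 * a + 2) : ℝ) *
      ∫ x in (0:ℝ)..(π / 2), x ^ (2 * a + 2) * (1 - 2 * x / π) ^ (2 * b + 1) * Real.cot x := by
    rw [hJ, ← intervalIntegral.integral_const_mul]
    refine intervalIntegral.integral_congr fun x _ => ?_
    have : π / 2 - x = π / 2 * (1 - 2 * x / π) := by field_simp
    simp only [this, mul_pow, show 2 * (a + 1) = 2 * a + 2 by ring]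
    ring
  rw [hH, hJ2, ← mul_assoc]
  congr 1
  rw [hc]
  have e1 : (4:ℝ) ^ (a + 1) = 2 ^ (2 * a + 2) := by
    rw [show 2 * a + 2 = 2 * (a + 1) by ring, pow_mul]; norm_num
  have e2 : (4:ℝ) ^ b = 2 ^ (2 * b) := by rw [pow_mul]; norm_num
  rw [e1, e2, div_pow]
  field_simp
  ring
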